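/- Schröder–Bernstein (explicit witness): the function h is a bijection from P onto Q, i.e., h maps P into Q, is injective on P, and maps P onto Q (Set.BijOn h P Q). -/

import Mathlib

def SB.Valid {α β : Type*} (P : Set α) (Q : Set β) : α ⊕ β → Prop
  | Sum.inl p => p ∈ P
  | Sum.inr q => q ∈ Q

def SB.step {α β : Type*} (f : α → β) (g : β → α) : α ⊕ β → α ⊕ β
  | Sum.inl p => Sum.inr (f p)
  | Sum.inr q => Sum.inl (g q)

def SB.ChainLE {α β : Type*} (f : α → β) (g : β → α) : α ⊕ β → α ⊕ β → Prop :=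
  Relation.ReflTransGen (fun x y => y = SB.step f g x)

def SB.Initial {α β : Type*} (P : Set α) (Q : Set β) (f : α → β) (g : β → α) :
    α ⊕ β → Prop
  | Sum.inl p => p ∉ g '' Q
  | Sum.inr q => q ∉ f '' P

def SB.InQStopper {α β : Type*} (P : Set α) (Q : Set β) (f : α → β) (g : β → α)
    (x : α ⊕ β) : Prop :=
  ∃ q ∈ Q, SB.Initial P Q f g (Sum.inr q) ∧ SB.ChainLE f g (Sum.inr q) x

open Classical in
noncomputable def SB.h {α β : Type*} (P : Set α) (Q : Set β) (f : α → β)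
    (g : β → α) (p : α) : β :=
  if hq : SB.InQStopper P Q f g (Sum.inl p) then
    haveI : Nonempty β := ⟨hq.choose⟩
    Function.invFunOn g Q p
  else f p

/-!
A chain that starts at a point of `Q` outside `f '' P` alternates between `Q` and `P`. Writing `A`
and `B` for the points of `P` and of `Q` lying on such chains, one step backwards gives `A = g '' B`
and `B = Q \ f '' P ∪ f '' A`; as `f` is injective on `P`, the second equation amounts to
`f '' (P \ A) = Q \ B`. Hence `g` restricts to a bijection from `B` onto `A`, `f` restricts to a
bijection from `P \ A` onto `Q \ B`, and `h` glues the inverse of the first to the second.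
-/

open Set

section Gluing

variable {α β : Type*}

theorem bijOn_image_of_leftInvOn {f : α → β} {f' : β → α} {s : Set α} (hf' : LeftInvOn f' f s) :
    BijOn f' (f '' s) s :=
  have hright : LeftInvOn f f' (f '' s) := forall_mem_image.2 fun _ hx ↦ congrArg f (hf' hx)
  BijOn.symm ⟨hright, hf'⟩ hf'.injOn.bijOn_image

theorem bijOn_union_of_disjoint {f : α → β} {s₁ s₂ : Set α} {t₁ t₂ : Set β}
    (h₁ : BijOn f s₁ t₁) (h₂ : BijOn f s₂ t₂) (ht : Disjoint t₁ t₂) :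
    BijOn f (s₁ ∪ s₂) (t₁ ∪ t₂) := by
  have hne : ∀ x ∈ s₁, ∀ y ∈ s₂, f x ≠ f y := fun _ hx _ hy ↦
    ht.ne_of_mem (h₁.mapsTo hx) (h₂.mapsTo hy)
  have hs : Disjoint s₁ s₂ := disjoint_left.2 fun x hx₁ hx₂ ↦ hne x hx₁ x hx₂ rfl
  exact h₁.union h₂ ((injOn_union hs).2 ⟨h₁.injOn, h₂.injOn, hne⟩)

end Gluing

namespace SB

variable {α β : Type*} {P : Set α} {Q : Set β} {f : α → β} {g : β → α}

theorem Valid.step (hfm : MapsTo f P Q) (hgm : MapsTo g Q P) {x : α ⊕ β} (hx : Valid P Q x) :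
    Valid P Q (step f g x) := by
  cases x with
  | inl p => exact hfm hx
  | inr q => exact hgm hx

theorem Valid.of_chainLE (hfm : MapsTo f P Q) (hgm : MapsTo g Q P) {x y : α ⊕ β}
    (hx : Valid P Q x) (hxy : ChainLE f g x y) : Valid P Q y := by
  induction hxy with
  | refl => exact hx
  | tail _ hstep ih => exact hstep ▸ ih.step hfm hgm

theorem InQStopper.valid (hfm : MapsTo f P Q) (hgm : MapsTo g Q P) {x : α ⊕ β}
    (hx : InQStopper P Q f g x) : Valid P Q x := by
  obtain ⟨q, hq, -, hqx⟩ := hx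
  exact Valid.of_chainLE hfm hgm (x := Sum.inr q) hq hqx

theorem inQStopper_iff_initial_or_step {x : α ⊕ β} :
    InQStopper P Q f g x ↔
      (∃ q ∈ Q \ f '' P, Sum.inr q = x) ∨ ∃ y, InQStopper P Q f g y ∧ step f g y = x := by
  constructor
  · rintro ⟨q, hq, hinit, hqx⟩
    obtain rfl | ⟨y, hqy, rfl⟩ := hqx.cases_tail
    · exact .inl ⟨q, ⟨hq, hinit⟩, rfl⟩
    · exact .inr ⟨y, ⟨q, hq, hinit, hqy⟩, rfl⟩
  · rintro (⟨q, ⟨hq, hinit⟩, rfl⟩ | ⟨y, ⟨q, hq, hinit, hqy⟩, rfl⟩)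
    · exact ⟨q, hq, hinit, .refl⟩
    · exact ⟨q, hq, hinit, hqy.tail rfl⟩

/-- The set `A` of points `p : α` such that `Sum.inl p` lies in a `Q`-stopper; on it `h` inverts
`g`. -/
def leftQStopper (P : Set α) (Q : Set β) (f : α → β) (g : β → α) : Set α :=
  {p | InQStopper P Q f g (Sum.inl p)}

/-- The set `B` of points `q : β` such that `Sum.inr q` lies in a `Q`-stopper; `h` maps
`leftQStopper P Q f g` onto it. -/
def rightQStopper (P : Set α) (Q : Set β) (f : α → β) (g : β → α) : Set β :=
  {q | InQStopper P Q f g (Sum.inr q)}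

theorem leftQStopper_subset (hfm : MapsTo f P Q) (hgm : MapsTo g Q P) :
    leftQStopper P Q f g ⊆ P :=
  fun _ hp ↦ InQStopper.valid hfm hgm hp

theorem rightQStopper_subset (hfm : MapsTo f P Q) (hgm : MapsTo g Q P) :
    rightQStopper P Q f g ⊆ Q :=
  fun _ hq ↦ InQStopper.valid hfm hgm hq

theorem image_rightQStopper : g '' rightQStopper P Q f g = leftQStopper P Q f g := by
  ext p
  simp [leftQStopper, rightQStopper, inQStopper_iff_initial_or_step (x := Sum.inl p), step]

theorem rightQStopper_eq_union :
    rightQStopper P Q f g = Q \ f '' P ∪ f '' leftQStopper P Q f g := by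
  ext q
  simp [leftQStopper, rightQStopper, inQStopper_iff_initial_or_step (x := Sum.inr q), step]

theorem image_sdiff_leftQStopper (hfm : MapsTo f P Q) (hfi : InjOn f P) (hgm : MapsTo g Q P) :
    f '' (P \ leftQStopper P Q f g) = Q \ rightQStopper P Q f g :=
  calc f '' (P \ leftQStopper P Q f g)
      = f '' P \ f '' leftQStopper P Q f g :=
        hfi.image_sdiff_subset (leftQStopper_subset hfm hgm)
    _ = (Q \ (Q \ f '' P)) \ f '' leftQStopper P Q f g := by
        rw [sdiff_sdiff_cancel_left hfm.image_subset]
    _ = Q \ rightQStopper P Q f g := by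
        rw [sdiff_sdiff, rightQStopper_eq_union]

theorem eqOn_h_compl_leftQStopper : EqOn f (h P Q f g) (leftQStopper P Q f g)ᶜ :=
  fun p hp ↦ by rw [h, dif_neg (show ¬InQStopper P Q f g (Sum.inl p) from hp)]

theorem leftInvOn_h_rightQStopper (hfm : MapsTo f P Q) (hgm : MapsTo g Q P) (hgi : InjOn g Q) :
    LeftInvOn (h P Q f g) g (rightQStopper P Q f g) := by
  intro q hq
  have hgq : InQStopper P Q f g (Sum.inl (g q)) := image_rightQStopper.subset ⟨q, hq, rfl⟩
  have : Nonempty β := ⟨q⟩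
  calc h P Q f g (g q)
    _ = Function.invFunOn g Q (g q) := dif_pos hgq
    _ = q := hgi.leftInvOn_invFunOn (rightQStopper_subset hfm hgm hq)

theorem bijOn_h_leftQStopper (hfm : MapsTo f P Q) (hgm : MapsTo g Q P) (hgi : InjOn g Q) :
    BijOn (h P Q f g) (leftQStopper P Q f g) (rightQStopper P Q f g) :=
  image_rightQStopper ▸ bijOn_image_of_leftInvOn (leftInvOn_h_rightQStopper hfm hgm hgi)

theorem bijOn_h_sdiff_leftQStopper (hfm : MapsTo f P Q) (hfi : InjOn f P) (hgm : MapsTo g Q P) :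
    BijOn (h P Q f g) (P \ leftQStopper P Q f g) (Q \ rightQStopper P Q f g) := by
  have hf : BijOn f (P \ leftQStopper P Q f g) (Q \ rightQStopper P Q f g) :=
    image_sdiff_leftQStopper hfm hfi hgm ▸ (hfi.mono sdiff_subset).bijOn_image
  exact hf.congr (eqOn_h_compl_leftQStopper.mono fun _ hp ↦ hp.2)

end SB

theorem h_bijOn {α β : Type*} (P : Set α) (Q : Set β)
    (f : α → β) (g : β → α)
    (hfm : Set.MapsTo f P Q) (hfi : Set.InjOn f P)
    (hgm : Set.MapsTo g Q P) (hgi : Set.InjOn g Q) :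
    Set.BijOn (SB.h P Q f g) P Q := by
  have hglue := bijOn_union_of_disjoint (SB.bijOn_h_leftQStopper hfm hgm hgi)
    (SB.bijOn_h_sdiff_leftQStopper hfm hfi hgm) disjoint_sdiff_right
  rwa [union_sdiff_cancel (SB.leftQStopper_subset hfm hgm),
    union_sdiff_cancel (SB.rightQStopper_subset hfm hgm)] at hglue
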